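/- Fix l ≥ 1 and κ = (k_1,…,k_l) ∈ (ℤ/2ℤ)^l, and let λ be an l-multipartition of d. Then any two standard λ-tableaux s and t satisfy deg(s) ≡ deg(t) (mod 2); in particular, the degrees of all standard λ-tableaux have the same parity, namely the parity of deg(t^λ) for the row-reading tableau t^λ. -/

import Mathlib

/-!
Core definitions: multipartitions, Young diagrams, tableaux, degrees,
in quantum characteristic 2 (residues in ℤ/2ℤ).
Nodes are 0-indexed: the node `(m, a, b)` denotes the box in component `m`,
row `a+1`, column `b+1` of the paper's 1-indexed conventions.
-/

/-- A node: (component, row, column), all 0-indexed. -/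
abbrev Node (l : ℕ) := Fin l × ℕ × ℕ

namespace Cyclo

variable {l d : ℕ}

/-- Residue of a node `(m, a, b)`: `κ m + (b - a)` in `ℤ/2ℤ`. -/
def res (κ : Fin l → ZMod 2) (N : Node l) : ZMod 2 :=
  κ N.1 + (N.2.2 : ZMod 2) - (N.2.1 : ZMod 2)

/-- A set of nodes is (the Young diagram of) a multipartition iff it is
downward closed in rows and columns within each component. -/
def IsDiagram (Y : Set (Node l)) : Prop :=
  ∀ m a b a' b', (m, a, b) ∈ Y → a' ≤ a → b' ≤ b → (m, a', b') ∈ Y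

/-- `M` is an addable node for the diagram `Y`. -/
def Addable (Y : Set (Node l)) (M : Node l) : Prop :=
  M ∉ Y ∧ IsDiagram (insert M Y)

/-- `M` is a removable node of the diagram `Y`. -/
def Removable (Y : Set (Node l)) (M : Node l) : Prop :=
  M ∈ Y ∧ IsDiagram (Y \ {M})

/-- `M` is below `N`: strictly later component, or same component and strictly lower row. -/
def Below (N M : Node l) : Prop :=
  N.1 < M.1 ∨ (N.1 = M.1 ∧ N.2.1 < M.2.1)

/-- `d_N(Y)`: number of addable nodes for `Y` below `N` of the same residue as `N`,
minus the number of removable nodes of `Y` below `N` of the same residue as `N`. -/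
noncomputable def dN (κ : Fin l → ZMod 2) (Y : Set (Node l)) (N : Node l) : ℤ :=
  ({M | Addable Y M ∧ res κ M = res κ N ∧ Below N M}.ncard : ℤ)
    - ({M | Removable Y M ∧ res κ M = res κ N ∧ Below N M}.ncard : ℤ)

/-- The Young diagram of the multipartition whose parts are `lam m a` (0-indexed rows). -/
def diagram (lam : Fin l → ℕ → ℕ) : Set (Node l) :=
  {N | N.2.2 < lam N.1 N.2.1}

/-- `lam` encodes an `l`-multipartition of `d`: each component is a partition
(antitone, vanishing beyond row `d`) and the sizes sum to `d`. -/
def IsMultipartition (lam : Fin l → ℕ → ℕ) (d : ℕ) : Prop :=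
  (∀ m, Antitone (lam m)) ∧ (∀ m a, d ≤ a → lam m a = 0) ∧
    ∑ m : Fin l, ∑ a ∈ Finset.range d, lam m a = d

/-- A λ-tableau, encoded by the function sending `r : Fin d` to the node
occupied by the entry `r + 1`: a bijective filling of the diagram by `1, …, d`. -/
def IsTableau (lam : Fin l → ℕ → ℕ) (t : Fin d → Node l) : Prop :=
  Function.Injective t ∧ Set.range t = diagram lam

/-- A standard λ-tableau: entries increase along rows and down columns of each
component. -/
def IsStandard (lam : Fin l → ℕ → ℕ) (t : Fin d → Node l) : Prop :=
  IsTableau lam t ∧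
    ∀ r s : Fin d, (t r).1 = (t s).1 → (t r).2.1 ≤ (t s).2.1 →
      (t r).2.2 ≤ (t s).2.2 → r ≤ s

/-- Lexicographic (row-reading) order on nodes. -/
def NodeLt (N M : Node l) : Prop :=
  N.1 < M.1 ∨ (N.1 = M.1 ∧ (N.2.1 < M.2.1 ∨ (N.2.1 = M.2.1 ∧ N.2.2 < M.2.2)))

/-- The row-reading tableau `t^λ`: entries `1, …, d` are filled along successive
rows of the components of `λ`, taking the components in order. -/
def IsRowReading (lam : Fin l → ℕ → ℕ) (t : Fin d → Node l) : Prop :=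
  IsTableau lam t ∧ ∀ r s : Fin d, r < s → NodeLt (t r) (t s)

/-- The degree of a (standard) tableau: `deg t = Σ_r d_{N_r}(shape of t_{≤ r})`,
which unfolds the recursion `deg t = d_N(λ) + deg (t_{≤ d-1})`, `deg ∅ = 0`. -/
noncomputable def deg (κ : Fin l → ZMod 2) (t : Fin d → Node l) : ℤ :=
  ∑ r : Fin d, dN κ (t '' {s | s ≤ r}) (t r)

/-- `ε` of a single partition (the sum of `⌊λ_a/2⌋` over rows), as a natural number. -/
def epsPart (d : ℕ) (p : ℕ → ℕ) : ℕ :=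
  ∑ a ∈ Finset.range d, p a / 2

/-- `n_i` of a single partition `p` placed in a component with offset `k`:
the number of nodes `(a,b)` of `p` with `k + b - a = i` in `ℤ/2ℤ`. -/
noncomputable def nNodes (k i : ZMod 2) (p : ℕ → ℕ) : ℕ :=
  {N : ℕ × ℕ | N.2 < p N.1 ∧ k + (N.2 : ZMod 2) - (N.1 : ZMod 2) = i}.ncard

/-- The parity `ε(λ)` of an `l`-multipartition. -/
noncomputable def eps (κ : Fin l → ZMod 2) (d : ℕ) (lam : Fin l → ℕ → ℕ) : ZMod 2 :=
  ((∑ m : Fin l, epsPart d (lam m) : ℕ) : ZMod 2) +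
    ((∑ j : Fin l, ∑ m : Fin l, if j < m then nNodes (κ j) (κ m) (lam j) else 0 : ℕ) : ZMod 2)

end Cyclo

/-!
Modulo 2 the integer `d_N(Y)` depends only on the node `N` and not on the diagram `Y` in which `N`
is the last node added. Indeed, if a row `a` of a partition `p` has a removable node then row
`a + 1` has an addable one, and conversely. Since the indicator of `x = i` in `ℤ/2ℤ` is the affine
function `x + i + 1`, the `i`-nodes among these two contribute `p a + p (a + 1)`, and this holds
even when neither node exists, because then `p a = p (a + 1)`. The sum over the rows below `N`
telescopes, which eliminates the row lengths. Hence `deg t` is congruent to a sum over the nodes of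
`λ` of terms that do not involve `t`.
-/

namespace Cyclo

section Partition

variable {p : ℕ → ℕ}

/-- Row `a` of the partition with row lengths `p` carries an addable node, i.e. is strictly shorter
than every row above it. -/
def IsAddableRow (p : ℕ → ℕ) (a : ℕ) : Prop := ∀ a' < a, p a < p a'

instance : DecidablePred (IsAddableRow p) := fun a => Nat.decidableBallLT a fun a' _ => p a < p a'

/-- Row `a` of the partition with row lengths `p` carries a removable node. -/
abbrev IsRemovableRow (p : ℕ → ℕ) (a : ℕ) : Prop := p (a + 1) < p a

lemma isAddableRow_succ_iff (hp : Antitone p) (a : ℕ) :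
    IsAddableRow p (a + 1) ↔ IsRemovableRow p a :=
  ⟨fun h => h a a.lt_succ_self, fun h _ ha' => h.trans_le (hp (Nat.le_of_lt_succ ha'))⟩

lemma IsAddableRow.le_of_eq_zero {a n : ℕ} (ha : IsAddableRow p a) (hn : p n = 0) : a ≤ n := by
  by_contra! h
  have := ha n h
  lia

lemma IsRemovableRow.lt_of_eq_zero (hp : Antitone p) {a n : ℕ} (ha : IsRemovableRow p a)
    (hn : p n = 0) : a < n := by
  by_contra! h
  exact (Nat.zero_le _).not_gt (ha.trans_le ((hp h).trans_eq hn))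

lemma ite_eq_eq_add_add_one (x i : ZMod 2) : (if x = i then 1 else 0 : ZMod 2) = x + i + 1 := by
  decide +revert

/-- The rows `a` with `c ≤ a ≤ n` that carry an addable `i`-node, for a partition with row lengths
`p` placed in a component with offset `k`. -/
def addableRows (k i : ZMod 2) (p : ℕ → ℕ) (c n : ℕ) : Finset ℕ :=
  {a ∈ Finset.Ico c (n + 1) | IsAddableRow p a ∧ k + (p a : ZMod 2) - a = i}

/-- The rows `a` with `c ≤ a < n` that carry a removable `i`-node, for a partition with row lengths
`p` placed in a component with offset `k`. The subtraction `p a - 1` is never truncated, as a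
removable row is nonempty. -/
def removableRows (k i : ZMod 2) (p : ℕ → ℕ) (c n : ℕ) : Finset ℕ :=
  {a ∈ Finset.Ico c n | IsRemovableRow p a ∧ k + ((p a - 1 : ℕ) : ZMod 2) - a = i}

lemma ite_removable_add_ite_addable_succ (hp : Antitone p) (k i : ZMod 2) (a : ℕ) :
    (if IsRemovableRow p a ∧ k + ((p a - 1 : ℕ) : ZMod 2) - a = i then 1 else 0 : ZMod 2)
      + (if IsAddableRow p (a + 1) ∧ k + (p (a + 1) : ZMod 2) - (a + 1 : ℕ) = i then 1 else 0)
      = p a + p (a + 1) := by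
  have two_eq_zero : (2 : ZMod 2) = 0 := CharTwo.two_eq_zero
  simp only [isAddableRow_succ_iff hp]
  by_cases h : IsRemovableRow p a
  · have cast_pred : ((p a - 1 : ℕ) : ZMod 2) = p a - 1 := Nat.cast_pred (Nat.zero_lt_of_lt h)
    simp only [h, true_and, ite_eq_eq_add_add_one, cast_pred]
    push_cast
    linear_combination (k - a + i) * two_eq_zero
  · have rows_eq : p (a + 1) = p a := (hp a.le_succ).antisymm (not_lt.mp h)
    simp only [h, false_and, if_false, rows_eq]
    linear_combination -(p a : ZMod 2) * two_eq_zero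

lemma card_addableRows_add_card_removableRows (hp : Antitone p) (k i : ZMod 2) {c n : ℕ}
    (hc : IsAddableRow p c) (hcn : c ≤ n) :
    ((addableRows k i p c n).card + (removableRows k i p c n).card : ZMod 2)
      = k + c + i + 1 + p n := by
  simp only [addableRows, removableRows, Finset.natCast_card_filter]
  induction n, hcn using Nat.le_induction with
  | base =>
    simp only [Nat.Ico_succ_singleton, Finset.sum_singleton, Finset.Ico_self, Finset.sum_empty, hc,
      true_and, ite_eq_eq_add_add_one, CharTwo.sub_eq_add]
    ring
  | succ n hcn ih =>
    rw [Finset.sum_Ico_succ_top (hcn.trans n.le_succ)]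
    simp only [Finset.sum_Ico_succ_top hcn] at ih ⊢
    linear_combination ih + ite_removable_add_ite_addable_succ hp k i n
      + (p n : ZMod 2) * CharTwo.two_eq_zero (R := ZMod 2)

end Partition

variable {l d : ℕ}

section Diagram

variable {p : Fin l → ℕ → ℕ}

lemma mem_diagram {m : Fin l} {a b : ℕ} : (m, a, b) ∈ diagram p ↔ b < p m a := Iff.rfl

lemma isDiagram_diagram (hp : ∀ m, Antitone (p m)) : IsDiagram (diagram p) :=
  fun m _ _ _ _ hY ha hb => hb.trans_lt (hY.trans_le (hp m ha))

lemma addable_diagram_iff (hp : ∀ m, Antitone (p m)) {m : Fin l} {a b : ℕ} :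
    Addable (diagram p) (m, a, b) ↔ IsAddableRow (p m) a ∧ b = p m a := by
  constructor
  · rintro ⟨notMem, isDiagram⟩
    have mem_of_ne {a' b'} (ha : a' ≤ a) (hb : b' ≤ b) (hne : a' ≠ a ∨ b' ≠ b) : b' < p m a' :=
      (isDiagram m a b a' b' (Or.inl rfl) ha hb).resolve_left (by simpa [imp_iff_not_or] using hne)
    have le_col : p m a ≤ b := not_lt.mp notMem
    have col_eq : b = p m a := by
      by_contra hne
      exact (mem_of_ne le_rfl le_col (Or.inr (Ne.symm hne))).false
    exact ⟨fun a' ha' => col_eq ▸ mem_of_ne ha'.le le_rfl (Or.inl ha'.ne), col_eq⟩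
  · rintro ⟨addable, rfl⟩
    refine ⟨(lt_irrefl (p m a) ·), ?_⟩
    rintro m' a₁ b₁ a' b' (heq | mem) ha hb
    · obtain ⟨rfl, rfl, rfl⟩ : m' = m ∧ a₁ = a ∧ b₁ = p m a := by simpa using heq
      rcases ha.lt_or_eq with ha | rfl
      · exact Or.inr (hb.trans_lt (addable a' ha))
      · rcases hb.lt_or_eq with hb | rfl
        · exact Or.inr hb
        · exact Or.inl rfl
    · exact Or.inr (isDiagram_diagram hp _ _ _ _ _ mem ha hb)

lemma removable_diagram_iff (hp : ∀ m, Antitone (p m)) {m : Fin l} {a b : ℕ} :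
    Removable (diagram p) (m, a, b) ↔ IsRemovableRow (p m) a ∧ b = p m a - 1 := by
  constructor
  · rintro ⟨mem, isDiagram⟩
    have notMem_of_ne {a' b'} (ha : a ≤ a') (hb : b ≤ b') (hne : a' ≠ a ∨ b' ≠ b) :
        p m a' ≤ b' := by
      by_contra! hlt
      exact (isDiagram m a' b' a b ⟨hlt, by simpa [imp_iff_not_or] using hne⟩ ha hb).2 rfl
    have row_below : p m (a + 1) ≤ b := notMem_of_ne a.le_succ le_rfl (Or.inl (by simp))
    have right : p m a ≤ b + 1 := notMem_of_ne le_rfl b.le_succ (Or.inr (by simp))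
    rw [mem_diagram] at mem
    exact ⟨row_below.trans_lt mem, by lia⟩
  · rintro ⟨removable, rfl⟩
    refine ⟨mem_diagram.mpr (by lia), ?_⟩
    rintro m' a₁ b₁ a' b' ⟨mem, hne⟩ ha hb
    refine ⟨isDiagram_diagram hp _ _ _ _ _ mem ha hb, fun heq => hne ?_⟩
    obtain ⟨rfl, rfl, rfl⟩ : m' = m ∧ a' = a ∧ b' = p m a - 1 := by simpa using heq
    rw [mem_diagram] at mem
    rcases ha.lt_or_eq with ha | rfl
    · have := hp m' (Nat.succ_le_of_lt ha)
      lia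
    · obtain rfl : b₁ = p m' a' - 1 := by lia
      rfl

lemma IsDiagram.exists_eq_diagram {Y : Set (Node l)} (hY : IsDiagram Y) (hfin : Y.Finite) :
    ∃ (p : Fin l → ℕ → ℕ) (n : ℕ), (∀ m, Antitone (p m)) ∧ (∀ m, p m n = 0) ∧ diagram p = Y := by
  have fin_component (m : Fin l) : (Prod.mk m ⁻¹' Y).Finite :=
    hfin.preimage (Prod.mk_right_injective m).injOn
  let component (m : Fin l) : YoungDiagram :=
    { cells := (fin_component m).toFinset
      isLowerSet := by
        rintro ⟨a, b⟩ ⟨a', b'⟩ ⟨ha, hb⟩ hab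
        simp only [Set.Finite.coe_toFinset] at hab ⊢
        exact hY m a b a' b' hab ha hb }
  have mem_component (m : Fin l) (a b : ℕ) : (a, b) ∈ component m ↔ (m, a, b) ∈ Y :=
    (fin_component m).mem_toFinset
  obtain ⟨n, hn⟩ := (hfin.image fun N => N.2.1).exists_notMem
  have row_n_empty (m : Fin l) : (component m).rowLen n = 0 := by
    by_contra hpos
    exact hn ⟨(m, n, 0), (mem_component m n 0).mp
      (YoungDiagram.mem_iff_lt_rowLen.mpr (Nat.pos_of_ne_zero hpos)), rfl⟩
  refine ⟨fun m => (component m).rowLen, n, fun m => (component m).rowLen_anti, row_n_empty, ?_⟩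
  ext ⟨m, a, b⟩
  rw [mem_diagram, ← YoungDiagram.mem_iff_lt_rowLen, mem_component]

lemma ncard_eq_sum_card_rows {S : Set (Node l)} (I : Finset (Fin l)) (rows : Fin l → Finset ℕ)
    (col : Fin l → ℕ → ℕ) (hS : ∀ m a b, (m, a, b) ∈ S ↔ m ∈ I ∧ a ∈ rows m ∧ b = col m a) :
    S.ncard = ∑ m ∈ I, (rows m).card := by
  let node : (Σ _ : Fin l, ℕ) → Node l := fun x => (x.1, x.2, col x.1 x.2)
  have node_injective : Function.Injective node := by
    rintro ⟨m, a⟩ ⟨m', a'⟩ h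
    obtain ⟨rfl, rfl, -⟩ : m = m' ∧ a = a' ∧ col m a = col m' a' := by simpa [node] using h
    rfl
  have eq_image : S = node '' (I.sigma rows : Finset (Σ _ : Fin l, ℕ)) := by
    ext ⟨m, a, b⟩
    simp only [hS, node, Set.mem_image, Finset.mem_coe, Finset.mem_sigma, Sigma.exists,
      Prod.mk.injEq]
    grind
  rw [eq_image, Set.ncard_image_of_injective _ node_injective, Set.ncard_coe_finset,
    Finset.card_sigma]

end Diagram

section NodeParity

/-- The first row of component `m` that lies below the node `N`, provided `m` is not an earlier
component than that of `N`. -/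
def firstRowBelow (N : Node l) (m : Fin l) : ℕ := if N.1 = m then N.2.1 + 1 else 0

lemma below_iff {N : Node l} {m : Fin l} {a b : ℕ} :
    Below N (m, a, b) ↔ N.1 ≤ m ∧ firstRowBelow N m ≤ a := by
  simp only [Below, firstRowBelow, le_iff_lt_or_eq (a := N.1)]
  split_ifs with h <;> simp [h]

/-- The parity of `d_N(Y)` for any diagram `Y` of which `N` is a node at the bottom of its column:
each component `m` from that of `N` on contributes the indicator of
`κ m - firstRowBelow N m = res κ N`. -/
def nodeParity (κ : Fin l → ZMod 2) (N : Node l) : ZMod 2 :=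
  ∑ m ∈ Finset.Ici N.1, (κ m + firstRowBelow N m + res κ N + 1)

variable {p : Fin l → ℕ → ℕ} {n : ℕ}

lemma ncard_addable_below (hp : ∀ m, Antitone (p m)) (hn : ∀ m, p m n = 0)
    (κ : Fin l → ZMod 2) (i : ZMod 2) (N : Node l) :
    {M | Addable (diagram p) M ∧ res κ M = i ∧ Below N M}.ncard
      = ∑ m ∈ Finset.Ici N.1, (addableRows (κ m) i (p m) (firstRowBelow N m) n).card := by
  refine ncard_eq_sum_card_rows _ _ p fun m a b => ?_
  have row_le (h : IsAddableRow (p m) a) : a < n + 1 := Nat.lt_succ_of_le (h.le_of_eq_zero (hn m))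
  simp only [Set.mem_ofPred_eq, addable_diagram_iff hp, below_iff, res, addableRows,
    Finset.mem_filter, Finset.mem_Ici, Finset.mem_Ico]
  grind

lemma ncard_removable_below (hp : ∀ m, Antitone (p m)) (hn : ∀ m, p m n = 0)
    (κ : Fin l → ZMod 2) (i : ZMod 2) (N : Node l) :
    {M | Removable (diagram p) M ∧ res κ M = i ∧ Below N M}.ncard
      = ∑ m ∈ Finset.Ici N.1, (removableRows (κ m) i (p m) (firstRowBelow N m) n).card := by
  refine ncard_eq_sum_card_rows _ _ (fun m a => p m a - 1) fun m a b => ?_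
  have row_lt (h : IsRemovableRow (p m) a) : a < n := h.lt_of_eq_zero (hp m) (hn m)
  simp only [Set.mem_ofPred_eq, removable_diagram_iff hp, below_iff, res, removableRows,
    Finset.mem_filter, Finset.mem_Ici, Finset.mem_Ico]
  grind

lemma isAddableRow_firstRowBelow (hp : ∀ m, Antitone (p m)) {N : Node l} (hN : N ∈ diagram p)
    (hbelow : (N.1, N.2.1 + 1, N.2.2) ∉ diagram p) (m : Fin l) :
    IsAddableRow (p m) (firstRowBelow N m) := by
  unfold firstRowBelow
  split_ifs with h
  · subst h
    exact (isAddableRow_succ_iff (hp _) _).mpr ((not_lt.mp hbelow).trans_lt hN)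
  · exact fun _ ha => absurd ha (Nat.not_lt_zero _)

theorem dN_eq_nodeParity (κ : Fin l → ZMod 2) {Y : Set (Node l)} (hY : IsDiagram Y)
    (hfin : Y.Finite) {N : Node l} (hN : N ∈ Y) (hbelow : (N.1, N.2.1 + 1, N.2.2) ∉ Y) :
    (dN κ Y N : ZMod 2) = nodeParity κ N := by
  obtain ⟨p, n, hp, hn, rfl⟩ := hY.exists_eq_diagram hfin
  have addable (m : Fin l) := isAddableRow_firstRowBelow hp hN hbelow m
  rw [dN, ncard_addable_below hp hn, ncard_removable_below hp hn, nodeParity]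
  push_cast
  rw [CharTwo.sub_eq_add, ← Finset.sum_add_distrib]
  refine Finset.sum_congr rfl fun m _ => ?_
  rw [card_addableRows_add_card_removableRows (hp m) _ _ (addable m)
    ((addable m).le_of_eq_zero (hn m)), hn m, Nat.cast_zero, add_zero]

end NodeParity

section Tableau

variable {lam : Fin l → ℕ → ℕ} {t : Fin d → Node l}

lemma IsRowReading.isStandard (ht : IsRowReading lam t) : IsStandard lam t := by
  refine ⟨ht.1, fun r s hcomponent hrow hcol => ?_⟩
  by_contra! hsr
  rcases ht.2 s r hsr with h | ⟨-, h | ⟨-, h⟩⟩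
  · exact h.ne' hcomponent
  · exact hrow.not_gt h
  · exact hcol.not_gt h

lemma IsStandard.isDiagram_image_le (hlam : ∀ m, Antitone (lam m)) (ht : IsStandard lam t)
    (r : Fin d) : IsDiagram (t '' {s | s ≤ r}) := by
  obtain ⟨⟨-, range_eq⟩, le_of_le⟩ := ht
  rintro m a b a' b' ⟨s, hs, hst⟩ ha hb
  have mem : (m, a, b) ∈ diagram lam := range_eq ▸ ⟨s, hst⟩
  obtain ⟨s', hst'⟩ : (m, a', b') ∈ Set.range t :=
    range_eq ▸ isDiagram_diagram hlam m a b a' b' mem ha hb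
  have hs' : s' ≤ s := le_of_le s' s (by rw [hst, hst']) (by rwa [hst, hst']) (by rwa [hst, hst'])
  exact ⟨s', hs'.trans hs, hst'⟩

lemma IsStandard.next_row_notMem_image_le (ht : IsStandard lam t) (r : Fin d) :
    ((t r).1, (t r).2.1 + 1, (t r).2.2) ∉ t '' {s | s ≤ r} := by
  rintro ⟨s, hs, hst⟩
  have hrs : r ≤ s := ht.2 r s (by rw [hst]) (by rw [hst]; exact Nat.le_succ _) (by rw [hst])
  obtain rfl : s = r := le_antisymm hs hrs
  simpa using congrArg (fun N => N.2.1) hst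

theorem IsStandard.deg_eq_finsum_nodeParity (hlam : ∀ m, Antitone (lam m))
    (ht : IsStandard lam t) (κ : Fin l → ZMod 2) :
    (deg κ t : ZMod 2) = ∑ᶠ N ∈ diagram lam, nodeParity κ N := by
  rw [deg, Int.cast_sum, ← ht.1.2, finsum_mem_range ht.1.1, finsum_eq_sum_of_fintype]
  exact Finset.sum_congr rfl fun r _ =>
    dN_eq_nodeParity κ (ht.isDiagram_image_le hlam r) (Set.toFinite _)
      (Set.mem_image_of_mem t (le_refl r)) (ht.next_row_notMem_image_le r)

end Tableau

end Cyclo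

open Cyclo in
/-- For any `l`-multipartition `λ` of `d` (`l ≥ 1`), any two
standard `λ`-tableaux `s` and `t` satisfy `deg s ≡ deg t (mod 2)`; in
particular every standard `λ`-tableau has the same parity of degree as the
row-reading tableau `t^λ`. -/
theorem statement4 (l d : ℕ) (hl : 1 ≤ l)
    (κ : Fin l → ZMod 2) (lam : Fin l → ℕ → ℕ)
    (hlam : IsMultipartition lam d) :
    (∀ s t : Fin d → Node l, IsStandard lam s → IsStandard lam t →
      ((deg κ s : ℤ) : ZMod 2) = ((deg κ t : ℤ) : ZMod 2)) ∧
    (∀ t u : Fin d → Node l, IsStandard lam t → IsRowReading lam u →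
      ((deg κ t : ℤ) : ZMod 2) = ((deg κ u : ℤ) : ZMod 2)) := by
  have deg_congr (s t : Fin d → Node l) (hs : IsStandard lam s) (ht : IsStandard lam t) :
      (deg κ s : ZMod 2) = (deg κ t : ZMod 2) :=
    (hs.deg_eq_finsum_nodeParity hlam.1 κ).trans (ht.deg_eq_finsum_nodeParity hlam.1 κ).symm
  exact ⟨deg_congr, fun t u ht hu => deg_congr t u ht hu.isStandard⟩
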